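/- The type B Jones–Wenzl projections satisfy the single-term recurrence Q^{(n+1)} = (Q^{(n)}/[n+1]_s) · ( Σ_{i=0}^{n+1} [i]_s · g_{n+1,i} ), where Q^{(n)} is viewed in TL^B_{n+1} via the natural inclusion. -/

import Mathlib

noncomputable section
open scoped Classical

/-! ### The field `ℂ(q,s)` and two-variable quantum integers -/

/-- The field `ℂ(q,s)` of rational functions in two variables. -/
abbrev 𝕃 : Type := FractionRing (MvPolynomial (Fin 2) ℂ)

/-- The variable `q`. -/
def qB : 𝕃 := algebraMap (MvPolynomial (Fin 2) ℂ) 𝕃 (MvPolynomial.X 0)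

/-- The variable `s`. -/
def sB : 𝕃 := algebraMap (MvPolynomial (Fin 2) ℂ) 𝕃 (MvPolynomial.X 1)

/-- The two-variable quantum integer `[n]_s`: `[0]_s = 1` and
`[n]_s = q^(n-1) s + q^(-(n-1)) s⁻¹` for `n ≥ 1`. -/
def bqInt (n : ℤ) : 𝕃 := if n = 0 then 1 else qB ^ (n - 1) * sB + qB ^ (1 - n) * sB⁻¹

/-! ### The Temperley–Lieb algebra of type B and its Jones–Wenzl projections -/

/-- Defining relations of the Temperley–Lieb algebra `TL^B_n` of type B.
The generator indexed by `i : Fin n` represents `e_i` (labels `0, …, n-1`):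
the type A relations among `e_1, …, e_{n-1}`, together with `e_0² = -[1]_s e_0`,
`e_1 e_0 e_1 = (q s⁻¹ + q⁻¹ s) e_1`, and `e_0 e_i = e_i e_0` for `i ≥ 2`. -/
inductive TLBrel (n : ℕ) : FreeAlgebra 𝕃 (Fin n) → FreeAlgebra 𝕃 (Fin n) → Prop
  | sqA (i : Fin n) (h : 1 ≤ (i : ℕ)) :
      TLBrel n (FreeAlgebra.ι 𝕃 i * FreeAlgebra.ι 𝕃 i) ((-(qB + qB⁻¹)) • FreeAlgebra.ι 𝕃 i)
  | sq0 (i : Fin n) (h : (i : ℕ) = 0) :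
      TLBrel n (FreeAlgebra.ι 𝕃 i * FreeAlgebra.ι 𝕃 i) ((-(bqInt 1)) • FreeAlgebra.ι 𝕃 i)
  | braidA (i j : Fin n) (hi : 1 ≤ (i : ℕ)) (hj : 1 ≤ (j : ℕ))
      (h : (j : ℕ) = i + 1 ∨ (i : ℕ) = j + 1) :
      TLBrel n (FreeAlgebra.ι 𝕃 i * FreeAlgebra.ι 𝕃 j * FreeAlgebra.ι 𝕃 i) (FreeAlgebra.ι 𝕃 i)
  | braid0 (i j : Fin n) (hi : (i : ℕ) = 1) (hj : (j : ℕ) = 0) :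
      TLBrel n (FreeAlgebra.ι 𝕃 i * FreeAlgebra.ι 𝕃 j * FreeAlgebra.ι 𝕃 i)
        ((qB * sB⁻¹ + qB⁻¹ * sB) • FreeAlgebra.ι 𝕃 i)
  | comm (i j : Fin n) (h : (i : ℕ) + 1 < j ∨ (j : ℕ) + 1 < i) :
      TLBrel n (FreeAlgebra.ι 𝕃 i * FreeAlgebra.ι 𝕃 j) (FreeAlgebra.ι 𝕃 j * FreeAlgebra.ι 𝕃 i)

/-- The Temperley–Lieb algebra `TL^B_n` of type B, with generators `e_0, …, e_{n-1}`. -/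
abbrev TLB (n : ℕ) : Type := RingQuot (TLBrel n)

/-- The generator `e_i` of `TL^B_n` (0-based labels). -/
def EB {n : ℕ} (i : Fin n) : TLB n := RingQuot.mkAlgHom 𝕃 (TLBrel n) (FreeAlgebra.ι 𝕃 i)

set_option synthInstance.maxHeartbeats 1000000 in
/-- The natural inclusion `TL^B_n → TL^B_{n+1}`, sending `e_i` to `e_i`. -/
def TLBincl (n : ℕ) : TLB n →ₐ[𝕃] TLB (n + 1) :=
  RingQuot.liftAlgHom 𝕃
    ⟨FreeAlgebra.lift 𝕃 (fun i => EB i.castSucc), by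
      intro x y h
      induction h with
      | sqA i h =>
          have h2 := RingQuot.mkAlgHom_rel 𝕃 (TLBrel.sqA i.castSucc (by simpa using h))
          simp only [map_mul, map_smul, FreeAlgebra.lift_ι_apply, EB] at h2 ⊢
          exact h2
      | sq0 i h =>
          have h2 := RingQuot.mkAlgHom_rel 𝕃 (TLBrel.sq0 i.castSucc (by simpa using h))
          simp only [map_mul, map_smul, FreeAlgebra.lift_ι_apply, EB] at h2 ⊢
          exact h2
      | braidA i j hi hj h =>
          have h2 := RingQuot.mkAlgHom_rel 𝕃
            (TLBrel.braidA i.castSucc j.castSucc (by simpa using hi) (by simpa using hj)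
              (by simpa using h))
          simp only [map_mul, FreeAlgebra.lift_ι_apply, EB] at h2 ⊢
          exact h2
      | braid0 i j hi hj =>
          have h2 := RingQuot.mkAlgHom_rel 𝕃
            (TLBrel.braid0 i.castSucc j.castSucc (by simpa using hi) (by simpa using hj))
          simp only [map_mul, map_smul, FreeAlgebra.lift_ι_apply, EB] at h2 ⊢
          exact h2
      | comm i j h =>
          have h2 := RingQuot.mkAlgHom_rel 𝕃
            (TLBrel.comm i.castSucc j.castSucc (by simpa using h))
          simp only [map_mul, FreeAlgebra.lift_ι_apply, EB] at h2 ⊢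
          exact h2⟩

/-- The iterated natural inclusion `TL^B_n → TL^B_{n+k}`. -/
def TLBinclIter (n : ℕ) : (k : ℕ) → TLB n →ₐ[𝕃] TLB (n + k)
  | 0 => AlgHom.id 𝕃 (TLB n)
  | k + 1 => (TLBincl (n + k)).comp (TLBinclIter n k)

/-- The type B Jones–Wenzl projection `Q^{(n)} ∈ TL^B_n`, via the recurrence
`Q^{(0)} = 1`, `Q^{(n+1)} = Q^{(n)} + ([n]_s/[n+1]_s) Q^{(n)} e_n Q^{(n)}`. -/
def JWB : (n : ℕ) → TLB n
  | 0 => 1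
  | n + 1 =>
      TLBincl n (JWB n) +
        (bqInt n / bqInt (n + 1)) •
          (TLBincl n (JWB n) * EB (Fin.last n) * TLBincl n (JWB n))

/-! ### Type B diagrams, their algebra elements, and coefficients -/

/-- The generator `e_t` (0-based label) of `TL^B_m`, or `1` if out of range. -/
def eB (m t : ℕ) : TLB m := if h : t < m then EB ⟨t, h⟩ else 1

/-- The element `g_{n,j} = e_{n-1} e_{n-2} ⋯ e_j` of `TL^B_m` (0-based labels),
equal to the identity when `j = n`; `g_{n,0}` is `g_{n,1}` with a dot on its bottom cap. -/
def gB (m n j : ℕ) : TLB m := ((List.range' j (n - j)).reverse.map (eB m)).prod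

/-!
Write `b n` for `[n]_s` and `Q n` for the projection, and let `S n = ∑_{i ≤ n} b i • g_{n,i}`, so
that `S (n + 1) = e n * S n + b (n + 1)`. The claim is `b (n + 1) • Q (n + 1) = Q n * S (n + 1)`. If
it holds for `n`, then in the only nontrivial term of `b (n + 2) • Q (n + 2)`,
`b (n + 1) • Q (n + 1) * e (n + 1) * Q (n + 1) = Q (n + 1) * e (n + 1) * Q n * S (n + 1)`,
the factor `Q n` commutes past `e (n + 1)` and is absorbed by `Q (n + 1)`. Absorption is
idempotence of `Q n`, which comes from the partial trace formula
`e (n + 1) * Q (n + 1) * e (n + 1) = -(b (n + 2) / b (n + 1)) • (Q n * e (n + 1))`.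
-/

/-- The Temperley–Lieb relations for `e 0, …, e (N - 1)`, with a separate loop value `-δ i` for each
generator and a scalar `u i` in each cubic relation. Type A is `δ = [2]`, `u = 1`; in type B the
values at `0` differ from the others. Only the cubic relations with the larger index outside are
asked for. Terms of `e` from index `N` on are unconstrained. -/
structure IsTemperleyLiebSeq {R A : Type*} [CommRing R] [Ring A] [Algebra R A] (δ u : ℕ → R)
    (e : ℕ → A) (N : ℕ) : Prop where
  mul_self : ∀ i < N, e i * e i = -δ i • e i
  mul_mul_self : ∀ i, i + 1 < N → e (i + 1) * e i * e (i + 1) = u i • e (i + 1)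
  commute : ∀ i j, i + 1 < j → j < N → Commute (e i) (e j)

/-- The abstract form of quantum integers: nonvanishing solutions `b` of the three-term recurrence
determined by the scalars `δ` and `u` of `IsTemperleyLiebSeq`. Type A is `b n = [n + 1]`, type B is
`b n = [n]_s`. -/
structure IsQuantumIntegerSeq {R : Type*} [Semiring R] (δ u b : ℕ → R) : Prop where
  ne_zero : ∀ n, b n ≠ 0
  zero : δ 0 * b 0 = b 1
  succ : ∀ n, δ (n + 1) * b (n + 1) = u n * b n + b (n + 2)

/-- The descending product `e (n - 1) * e (n - 2) * ⋯ * e i`, the algebraic form of the diagram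
`g_{n,i}`. It is `1` for `n ≤ i`. -/
def descProd {M : Type*} [Monoid M] (e : ℕ → M) (n i : ℕ) : M :=
  ((List.range' i (n - i)).reverse.map e).prod

theorem descProd_self {M : Type*} [Monoid M] (e : ℕ → M) (n : ℕ) : descProd e n n = 1 := by
  simp [descProd]

theorem descProd_succ {M : Type*} [Monoid M] (e : ℕ → M) {n i : ℕ} (hi : i ≤ n) :
    descProd e (n + 1) i = e n * descProd e n i := by
  simp [descProd, Nat.succ_sub hi, List.range'_concat, Nat.add_sub_cancel' hi]

theorem sum_smul_descProd_succ {R A : Type*} [CommSemiring R] [Semiring A] [Algebra R A]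
    (b : ℕ → R) (e : ℕ → A) (n : ℕ) :
    ∑ i ∈ Finset.range (n + 2), b i • descProd e (n + 1) i =
      e n * ∑ i ∈ Finset.range (n + 1), b i • descProd e n i + b (n + 1) • 1 := by
  rw [Finset.sum_range_succ, descProd_self, Finset.mul_sum]
  congr 1
  refine Finset.sum_congr rfl fun i hi => ?_
  rw [descProd_succ e (Finset.mem_range_succ_iff.mp hi), mul_smul_comm]

theorem isIdempotentElem_add_smul {R A : Type*} [CommRing R] [Ring A] [Algebra R A] {p y : A}
    {c : R} (hp : IsIdempotentElem p) (hpy : p * y = y) (hyp : y * p = y)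
    (hy : c • (y * y) = -y) : IsIdempotentElem (p + c • y) := by
  calc (p + c • y) * (p + c • y) = p * p + c • (p * y) + c • (y * p) + c • c • (y * y) := by
        simp only [add_mul, mul_add, smul_mul_assoc, mul_smul_comm, smul_add]; abel
    _ = p + c • y := by rw [hp.eq, hpy, hyp, hy, smul_neg]; abel

section JonesWenzl

variable {K A : Type*} [Field K] [Ring A] [Algebra K A] {δ u b : ℕ → K} {e : ℕ → A} {N : ℕ}

/-- The Jones–Wenzl elements attached to a sequence `e` in an arbitrary algebra; `jonesWenzl b e n`
involves only `e 0, …, e (n - 1)`. -/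
def jonesWenzl (b : ℕ → K) (e : ℕ → A) : ℕ → A
  | 0 => 1
  | n + 1 => jonesWenzl b e n + (b n / b (n + 1)) • (jonesWenzl b e n * e n * jonesWenzl b e n)

theorem commute_jonesWenzl_of_forall_lt (b : ℕ → K) {x : A} {n : ℕ}
    (hx : ∀ i < n, Commute (e i) x) : Commute (jonesWenzl b e n) x := by
  induction n with
  | zero => exact Commute.one_left x
  | succ n ih =>
    have hQ : Commute (jonesWenzl b e n) x := ih fun i hi => hx i (by omega)
    exact hQ.add_left (((hQ.mul_left (hx n n.lt_succ_self)).mul_left hQ).smul_left _)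

theorem IsTemperleyLiebSeq.commute_jonesWenzl (he : IsTemperleyLiebSeq δ u e N) (b : ℕ → K) {n : ℕ}
    (hn : n + 1 < N) : Commute (jonesWenzl b e n) (e (n + 1)) :=
  commute_jonesWenzl_of_forall_lt b fun i hi => he.commute i (n + 1) (by omega) hn

theorem jonesWenzl_succ_mul_self {n : ℕ} (hQ : IsIdempotentElem (jonesWenzl b e n)) :
    jonesWenzl b e (n + 1) * jonesWenzl b e n = jonesWenzl b e (n + 1) := by
  rw [jonesWenzl, add_mul, hQ.eq, smul_mul_assoc, mul_assoc _ _ (jonesWenzl b e n), hQ.eq]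

theorem mul_jonesWenzl_succ_mul (hb : IsQuantumIntegerSeq δ u b) (he : IsTemperleyLiebSeq δ u e N)
    {n : ℕ} (hn : n + 1 < N) (hQ : IsIdempotentElem (jonesWenzl b e n)) :
    e (n + 1) * jonesWenzl b e (n + 1) * e (n + 1) =
      -(b (n + 2) / b (n + 1)) • (jonesWenzl b e n * e (n + 1)) := by
  have hcomm : jonesWenzl b e n * e (n + 1) = e (n + 1) * jonesWenzl b e n :=
    he.commute_jonesWenzl b hn
  have hcoeff : -δ (n + 1) + b n / b (n + 1) * u n = -(b (n + 2) / b (n + 1)) := by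
    field_simp [hb.ne_zero (n + 1)]
    linear_combination -hb.succ n
  rw [jonesWenzl]
  set Q := jonesWenzl b e n
  set x := e (n + 1)
  have hlinear : x * Q * x = -δ (n + 1) • (Q * x) := by
    rw [← hcomm, mul_assoc, he.mul_self (n + 1) hn, mul_smul_comm]
  have hcubic : x * (Q * e n * Q) * x = u n • (Q * x) := by
    calc x * (Q * e n * Q) * x = (x * Q) * e n * (Q * x) := by simp only [mul_assoc]
      _ = (Q * x) * e n * (x * Q) := by rw [hcomm]
      _ = Q * (x * e n * x) * Q := by simp only [mul_assoc]
      _ = u n • (Q * (x * Q)) := by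
        rw [he.mul_mul_self n hn, mul_smul_comm, smul_mul_assoc, mul_assoc]
      _ = u n • (Q * x) := by rw [← hcomm, ← mul_assoc, hQ.eq]
  rw [mul_add, add_mul, mul_smul_comm, smul_mul_assoc, hlinear, hcubic, smul_smul, ← add_smul,
    hcoeff]

theorem jonesWenzl_conj_mul_self (hb : IsQuantumIntegerSeq δ u b) (he : IsTemperleyLiebSeq δ u e N)
    {n : ℕ} (hn : n < N) (hQ : ∀ k ≤ n, IsIdempotentElem (jonesWenzl b e k)) :
    jonesWenzl b e n * e n * jonesWenzl b e n * (jonesWenzl b e n * e n * jonesWenzl b e n) =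
      -(b (n + 1) / b n) • (jonesWenzl b e n * e n * jonesWenzl b e n) := by
  cases n with
  | zero =>
    have hδ : δ 0 = b 1 / b 0 := eq_div_of_mul_eq (hb.ne_zero 0) hb.zero
    simp [jonesWenzl, he.mul_self 0 hn, hδ]
  | succ n =>
    have hQn := hQ n n.le_succ
    have htrace := mul_jonesWenzl_succ_mul hb he hn hQn
    have habsorb := jonesWenzl_succ_mul_self hQn
    have hidem := (hQ (n + 1) le_rfl).eq
    set R := jonesWenzl b e (n + 1)
    set x := e (n + 1)
    calc R * x * R * (R * x * R) = R * x * (R * R) * x * R := by simp only [mul_assoc]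
      _ = R * (x * R * x) * R := by rw [hidem]; simp only [mul_assoc]
      _ = -(b (n + 2) / b (n + 1)) • (R * jonesWenzl b e n * x * R) := by
        rw [htrace, mul_smul_comm, smul_mul_assoc, ← mul_assoc]
      _ = -(b (n + 2) / b (n + 1)) • (R * x * R) := by rw [habsorb]

theorem isIdempotentElem_jonesWenzl (hb : IsQuantumIntegerSeq δ u b)
    (he : IsTemperleyLiebSeq δ u e N) {n : ℕ} (hn : n ≤ N) :
    IsIdempotentElem (jonesWenzl b e n) := by
  induction n using Nat.strong_induction_on with
  | _ n ih =>
  cases n with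
  | zero => exact IsIdempotentElem.one
  | succ n =>
    have hQ : ∀ k ≤ n, IsIdempotentElem (jonesWenzl b e k) := fun k hk =>
      ih k (by omega) (by omega)
    have hQn := (hQ n le_rfl).eq
    have hcoeff : b n / b (n + 1) * -(b (n + 1) / b n) = -1 := by
      field_simp [hb.ne_zero n, hb.ne_zero (n + 1)]
    refine isIdempotentElem_add_smul (hQ n le_rfl) ?_ ?_ ?_
    · rw [← mul_assoc, ← mul_assoc, hQn]
    · rw [mul_assoc, hQn]
    · rw [jonesWenzl_conj_mul_self hb he hn hQ, smul_smul, hcoeff, neg_one_smul]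

theorem smul_jonesWenzl_succ {n : ℕ} (hn : b (n + 1) ≠ 0) :
    b (n + 1) • jonesWenzl b e (n + 1) =
      b n • (jonesWenzl b e n * e n * jonesWenzl b e n) + b (n + 1) • jonesWenzl b e n := by
  rw [jonesWenzl, smul_add, smul_smul, mul_div_cancel₀ _ hn, add_comm]

theorem smul_jonesWenzl_succ_eq_mul_sum (hb : IsQuantumIntegerSeq δ u b)
    (he : IsTemperleyLiebSeq δ u e N) {n : ℕ} (hn : n < N) :
    b (n + 1) • jonesWenzl b e (n + 1) =
      jonesWenzl b e n * ∑ i ∈ Finset.range (n + 2), b i • descProd e (n + 1) i := by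
  induction n with
  | zero =>
    rw [smul_jonesWenzl_succ (hb.ne_zero 1), sum_smul_descProd_succ]
    simp [jonesWenzl, descProd_self]
  | succ n ih =>
    have hcomm : e (n + 1) * jonesWenzl b e n = jonesWenzl b e n * e (n + 1) :=
      (he.commute_jonesWenzl b hn).symm
    have habsorb : jonesWenzl b e (n + 1) * jonesWenzl b e n = jonesWenzl b e (n + 1) :=
      jonesWenzl_succ_mul_self (isIdempotentElem_jonesWenzl hb he (by omega))
    rw [smul_jonesWenzl_succ (hb.ne_zero (n + 2)), sum_smul_descProd_succ, mul_add, mul_smul_comm,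
      mul_one]
    set S := ∑ i ∈ Finset.range (n + 2), b i • descProd e (n + 1) i
    congr 1
    calc b (n + 1) • (jonesWenzl b e (n + 1) * e (n + 1) * jonesWenzl b e (n + 1))
        = jonesWenzl b e (n + 1) * (e (n + 1) * jonesWenzl b e n) * S := by
          rw [← mul_smul_comm, ih (by omega)]; simp only [mul_assoc]
      _ = jonesWenzl b e (n + 1) * jonesWenzl b e n * (e (n + 1) * S) := by
          rw [hcomm]; simp only [mul_assoc]
      _ = jonesWenzl b e (n + 1) * (e (n + 1) * S) := by rw [habsorb]

theorem JWB_single_term_recurrence_general (hb : IsQuantumIntegerSeq δ u b)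
    (he : IsTemperleyLiebSeq δ u e N) {n : ℕ} (hn : n < N) :
    jonesWenzl b e (n + 1) =
      (b (n + 1))⁻¹ •
        (jonesWenzl b e n * ∑ i ∈ Finset.range (n + 2), b i • descProd e (n + 1) i) :=
  (eq_inv_smul_iff₀ (hb.ne_zero (n + 1))).mpr (smul_jonesWenzl_succ_eq_mul_sum hb he hn)

end JonesWenzl

theorem qB_ne_zero : qB ≠ 0 :=
  (FaithfulSMul.algebraMap_eq_zero_iff _ _).not.mpr (MvPolynomial.X_ne_zero 0)

theorem sB_ne_zero : sB ≠ 0 :=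
  (FaithfulSMul.algebraMap_eq_zero_iff _ _).not.mpr (MvPolynomial.X_ne_zero 1)

theorem bqInt_natCast_succ (k : ℕ) :
    bqInt ((k + 1 : ℕ) : ℤ) = qB ^ k * sB + (qB ^ k)⁻¹ * sB⁻¹ := by
  rw [bqInt, if_neg (by omega), show ((k + 1 : ℕ) : ℤ) - 1 = k by push_cast; ring,
    show 1 - ((k + 1 : ℕ) : ℤ) = -k by push_cast; ring, zpow_neg, zpow_natCast]

theorem qB_pow_mul_sB_sq_add_one_ne_zero (k : ℕ) : (qB ^ k * sB) ^ 2 + 1 ≠ 0 := by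
  let p : MvPolynomial (Fin 2) ℂ := (MvPolynomial.X 0 ^ k * MvPolynomial.X 1) ^ 2 + 1
  have hp : p ≠ 0 := fun h => by simpa [p] using congrArg MvPolynomial.constantCoeff h
  simpa [p, qB, sB] using (FaithfulSMul.algebraMap_eq_zero_iff _ 𝕃).not.mpr hp

theorem bqInt_natCast_ne_zero (n : ℕ) : bqInt (n : ℤ) ≠ 0 := by
  cases n with
  | zero => simp [bqInt]
  | succ k =>
    have hx : qB ^ k * sB ≠ 0 := mul_ne_zero (pow_ne_zero k qB_ne_zero) sB_ne_zero
    have hfactor : bqInt ((k + 1 : ℕ) : ℤ) = ((qB ^ k * sB) ^ 2 + 1) / (qB ^ k * sB) := by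
      rw [bqInt_natCast_succ, ← mul_inv, add_div, pow_two, mul_self_div_self, one_div]
    rw [hfactor]
    exact div_ne_zero (qB_pow_mul_sB_sq_add_one_ne_zero k) hx

/-- The scalars `δ i` in the relations `e_i² = -δ i • e_i` of type B. -/
def deltaB : ℕ → 𝕃
  | 0 => bqInt 1
  | _ + 1 => qB + qB⁻¹

/-- The scalars `u i` in the relations `e_{i+1} e_i e_{i+1} = u i • e_{i+1}` of type B. -/
def cubicB : ℕ → 𝕃
  | 0 => qB * sB⁻¹ + qB⁻¹ * sB
  | _ + 1 => 1

theorem isQuantumIntegerSeq_bqInt : IsQuantumIntegerSeq deltaB cubicB fun n : ℕ => bqInt n where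
  ne_zero := bqInt_natCast_ne_zero
  zero := by simp [deltaB, bqInt]
  succ n := by
    have hq := qB_ne_zero
    have hs := sB_ne_zero
    cases n with
    | zero =>
      simp only [deltaB, cubicB, bqInt_natCast_succ, Nat.cast_zero,
        show bqInt 0 = 1 from if_pos rfl]
      field_simp
      ring
    | succ k =>
      simp only [deltaB, cubicB, bqInt_natCast_succ]
      field_simp
      ring

theorem eB_of_lt {m i : ℕ} (h : i < m) : eB m i = EB ⟨i, h⟩ := dif_pos h

theorem mkAlgHom_ι_eq_eB {n : ℕ} (i : Fin n) :
    RingQuot.mkAlgHom 𝕃 (TLBrel n) (FreeAlgebra.ι 𝕃 i) = eB n i :=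
  (eB_of_lt i.is_lt).symm

theorem isTemperleyLiebSeq_eB (m : ℕ) : IsTemperleyLiebSeq deltaB cubicB (eB m) m where
  mul_self i hi := by
    cases i with
    | zero =>
      simpa [mkAlgHom_ι_eq_eB, deltaB] using
        RingQuot.mkAlgHom_rel 𝕃 (TLBrel.sq0 (⟨0, hi⟩ : Fin m) rfl)
    | succ i =>
      simpa [mkAlgHom_ι_eq_eB, deltaB] using
        RingQuot.mkAlgHom_rel 𝕃 (TLBrel.sqA (⟨i + 1, hi⟩ : Fin m) (by simp))
  mul_mul_self i hi := by
    cases i with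
    | zero =>
      simpa [mkAlgHom_ι_eq_eB, cubicB] using
        RingQuot.mkAlgHom_rel 𝕃 (TLBrel.braid0 (⟨1, hi⟩ : Fin m) ⟨0, by omega⟩ rfl rfl)
    | succ i =>
      simpa [mkAlgHom_ι_eq_eB, cubicB] using RingQuot.mkAlgHom_rel 𝕃
        (TLBrel.braidA (⟨i + 2, hi⟩ : Fin m) ⟨i + 1, by omega⟩ (by simp) (by simp) (Or.inr rfl))
  commute i j hij hj := by
    simpa [mkAlgHom_ι_eq_eB, Commute, SemiconjBy] using
      RingQuot.mkAlgHom_rel 𝕃 (TLBrel.comm (⟨i, by omega⟩ : Fin m) ⟨j, hj⟩ (Or.inl hij))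

theorem TLBincl_EB (n : ℕ) (i : Fin n) : TLBincl n (EB i) = EB i.castSucc := by
  simp [TLBincl, EB]

theorem map_JWB {A : Type*} [Ring A] [Algebra 𝕃 A] {n : ℕ} (φ : TLB n →ₐ[𝕃] A) (e : ℕ → A)
    (hφ : ∀ i : Fin n, φ (EB i) = e i) :
    φ (JWB n) = jonesWenzl (fun k : ℕ => bqInt k) e n := by
  induction n with
  | zero => simp [JWB, jonesWenzl]
  | succ n ih =>
    have hincl : φ (TLBincl n (JWB n)) = jonesWenzl (fun k : ℕ => bqInt k) e n :=
      ih (φ.comp (TLBincl n)) fun i => by simp [TLBincl_EB, hφ]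
    simp [JWB, jonesWenzl, hincl, hφ]

theorem JWB_eq_jonesWenzl (n : ℕ) : JWB n = jonesWenzl (fun k : ℕ => bqInt k) (eB n) n :=
  map_JWB (AlgHom.id 𝕃 (TLB n)) (eB n) fun i => (eB_of_lt i.is_lt).symm

theorem TLBincl_JWB (n : ℕ) :
    TLBincl n (JWB n) = jonesWenzl (fun k : ℕ => bqInt k) (eB (n + 1)) n :=
  map_JWB (TLBincl n) (eB (n + 1)) fun i =>
    (TLBincl_EB n i).trans (eB_of_lt (Nat.lt_succ_of_lt i.is_lt)).symm

/-- The type B Jones–Wenzl projections satisfy the single-term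
recurrence `Q^{(n+1)} = (Q^{(n)}/[n+1]_s) · (Σ_{i=0}^{n+1} [i]_s g_{n+1,i})`, where
`Q^{(n)}` is viewed in `TL^B_{n+1}` via the natural inclusion and
`g_{n+1,i} = e_n e_{n-1} ⋯ e_i`. -/
theorem JWB_single_term_recurrence (n : ℕ) :
    JWB (n + 1) =
      (bqInt (n + 1))⁻¹ •
        (TLBincl n (JWB n) * ∑ i ∈ Finset.range (n + 2), bqInt i • gB (n + 1) (n + 1) i) := by
  rw [JWB_eq_jonesWenzl, TLBincl_JWB]
  exact_mod_cast JWB_single_term_recurrence_general isQuantumIntegerSeq_bqInt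
    (isTemperleyLiebSeq_eB (n + 1)) n.lt_succ_self
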